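/- arXiv:2402.14204 — 2 statements merged into one kernel-verified Lean document; each statement's English description precedes it below -/
import Mathlib

section
/- Let n ≥ 2 and let A be a real symmetric n×n matrix with tr(A) > 0 and (tr A)² − tr(A²) > 0 (equivalently, the second elementary symmetric function S₂ of its eigenvalues is positive). Then the matrix P₁ = (tr A)·I − A is positive definite. (This is the algebraic content of Proposition 2.3.3: when the shape operator A satisfies H₂ > 0, the operator L₁ = Tr(P₁ ∘ hess) is elliptic.) -/
/-! In terms of the eigenvalues `λ i` of `A`, the hypothesis on the traces says
`∑ j, λ j ^ 2 < c ^ 2` for `c = tr A`. Hence each single square `λ i ^ 2` is below `c ^ 2`, and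
as `c ≥ 0` this gives `λ i < c`: the eigenvalues `c - λ i` of `c • 1 - A` are positive. -/

theorem lt_of_sum_sq_lt_sq {ι R : Type*} [Ring R] [LinearOrder R] [IsStrictOrderedRing R]
    {s : Finset ι} {f : ι → R} {c : R} (hc : 0 ≤ c) (h : ∑ j ∈ s, f j ^ 2 < c ^ 2)
    {i : ι} (hi : i ∈ s) : f i < c :=
  have single_sq_le : f i ^ 2 ≤ ∑ j ∈ s, f j ^ 2 :=
    Finset.single_le_sum (f := fun j ↦ f j ^ 2) (fun j _ ↦ sq_nonneg (f j)) hi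
  lt_of_pow_lt_pow_left₀ 2 hc (single_sq_le.trans_lt h)

section Hermitian

open scoped ComplexOrder

variable {𝕜 ι : Type*} [RCLike 𝕜] [Fintype ι] [DecidableEq ι] {A : Matrix ι ι 𝕜}

theorem trace_pow_eq_sum_eigenvalues_pow (hA : A.IsHermitian) (k : ℕ) :
    (A ^ k).trace = ∑ i, (hA.eigenvalues i : 𝕜) ^ k := by
  conv_lhs => rw [hA.spectral_theorem, ← map_pow, Matrix.diagonal_pow,
    Unitary.conjStarAlgAut_apply, Matrix.trace_mul_cycle, Unitary.coe_star_mul_self, one_mul,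
    Matrix.trace_diagonal]
  rfl

theorem posDef_smul_one_sub_iff_eigenvalues_lt (hA : A.IsHermitian) (c : 𝕜) :
    (c • (1 : Matrix ι ι 𝕜) - A).PosDef ↔ ∀ i, (hA.eigenvalues i : 𝕜) < c := by
  have diagonalization : c • (1 : Matrix ι ι 𝕜) - A =
      Unitary.conjStarAlgAut 𝕜 _ hA.eigenvectorUnitary
        (Matrix.diagonal fun i ↦ c - (hA.eigenvalues i : 𝕜)) := by
    conv_lhs => rw [hA.spectral_theorem]
    rw [← Matrix.diagonal_sub, map_sub, ← Matrix.smul_one_eq_diagonal, map_smul, map_one]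
    rfl
  rw [diagonalization, Unitary.conjStarAlgAut_apply,
    Matrix.IsUnit.posDef_star_right_conjugate_iff Unitary.isUnit_coe, Matrix.posDef_diagonal_iff]
  simp only [sub_pos]

theorem posDef_smul_one_sub_of_trace_sq_lt_sq (hA : A.IsHermitian) {c : 𝕜} (hc : 0 ≤ c)
    (h : (A ^ 2).trace < c ^ 2) : (c • (1 : Matrix ι ι 𝕜) - A).PosDef := by
  obtain ⟨r, hr, rfl⟩ := RCLike.nonneg_iff_exists_ofReal.mp hc
  have sum_sq_lt : ∑ i, hA.eigenvalues i ^ 2 < r ^ 2 := by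
    rw [trace_pow_eq_sum_eigenvalues_pow hA] at h
    exact_mod_cast h
  refine (posDef_smul_one_sub_iff_eigenvalues_lt hA _).mpr fun i ↦ ?_
  exact RCLike.ofReal_lt_ofReal.mpr (lt_of_sum_sq_lt_sq hr sum_sq_lt (Finset.mem_univ i))

theorem newton_tensor_one_posDef_general (hA : A.IsHermitian) (htr : 0 ≤ A.trace)
    (hS₂ : 0 < A.trace ^ 2 - (A * A).trace) :
    (A.trace • (1 : Matrix ι ι 𝕜) - A).PosDef :=
  posDef_smul_one_sub_of_trace_sq_lt_sq hA htr (sq A ▸ sub_pos.mp hS₂)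

end Hermitian

/-- If `A` is a real symmetric matrix with `tr A > 0` and `(tr A)² − tr(A²) > 0`,
then the first Newton tensor `P₁ = (tr A)·I − A` is positive definite. -/
theorem newton_tensor_one_posDef (n : ℕ) (hn : 2 ≤ n)
    (A : Matrix (Fin n) (Fin n) ℝ) (hA : A.IsSymm)
    (h1 : 0 < A.trace) (h2 : 0 < A.trace ^ 2 - (A * A).trace) :
    (A.trace • (1 : Matrix (Fin n) (Fin n) ℝ) - A).PosDef :=
  newton_tensor_one_posDef_general (Matrix.isHermitian_iff_isSymm.mpr hA) h1.le h2
end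

section
/- (Euclidean case of Theorem 3.2.1.) Let n ≥ 1 and let P : ℝⁿ → Mₙ(ℝ) be a continuous map taking values in symmetric positive semidefinite matrices such that sup_{x∈ℝⁿ} tr(P(x)) < +∞; for u : ℝⁿ → ℝ of class C², define L u (x) = tr(P(x) · Hess u(x)). Let G : [0, +∞) → ℝ be a smooth function with G(0) > 0, G′(t) ≥ 0 for all t ≥ 0, ∫₀^{+∞} G(t)^{−1/2} dt = +∞, and limsup_{t→+∞} t·G(t^{1/2})/G(t) < +∞. Suppose there exists a nonnegative C² function γ : ℝⁿ → ℝ such that: (1) γ(x) → +∞ as |x| → +∞; (2) there exist A > 0 and a compact set K₁ ⊆ ℝⁿ with ‖∇γ(x)‖ ≤ A·γ(x)^{1/2} for all x ∉ K₁; (3) there exist B > 0 and a compact set K₂ ⊆ ℝⁿ with Lγ(x) ≤ B·γ(x)^{1/2}·G(γ(x)^{1/2})^{1/2} for all x ∉ K₂. Then the Omori–Yau maximum principle holds for L on ℝⁿ: for every C² function u : ℝⁿ → ℝ with u* = sup_{ℝⁿ} u < +∞, there exists a sequence of points (x_j) in ℝⁿ such that for every j ≥ 1: u(x_j) > u* −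 1/j, ‖∇u(x_j)‖ < 1/j, and Lu(x_j) < 1/j. -/
open MeasureTheory Filter

/-- The Hessian matrix of `u : ℝⁿ → ℝ` at `x`, in the standard coordinates. -/
noncomputable def hessMat {n : ℕ} (u : EuclideanSpace ℝ (Fin n) → ℝ)
    (x : EuclideanSpace ℝ (Fin n)) : Matrix (Fin n) (Fin n) ℝ :=
  fun i j => iteratedFDeriv ℝ 2 u x ![EuclideanSpace.single i 1, EuclideanSpace.single j 1]

/-- The semidefinite elliptic operator `L u = tr(P · Hess u)`. -/
noncomputable def Lop {n : ℕ} (P : EuclideanSpace ℝ (Fin n) → Matrix (Fin n) (Fin n) ℝ)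
    (u : EuclideanSpace ℝ (Fin n) → ℝ) (x : EuclideanSpace ℝ (Fin n)) : ℝ :=
  (P x * hessMat u x).trace

/-! If `u` attains its supremum, a maximum point will do. Otherwise, the function
`φ(t) = ∫₀ᵗ ds / √G(s)` is concave and tends to infinity, so for every `ε > 0` the function
`u - ε φ(γ)` attains its maximum at some `x`. By concavity `x` also maximises
`u - ε φ'(γ(x)) γ`, which is of class `C²`; hence `∇u = ε φ'(γ) ∇γ` and `L u ≤ ε φ'(γ) L γ` at `x`.
As `ε → 0`, `x` leaves every compact set, and outside a compact set the growth conditions on `γ`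
and `G` bound `φ'(γ) ‖∇γ‖` and `φ'(γ) L γ`. -/

open Set Topology
open scoped Matrix

open scoped ComplexOrder MatrixOrder Matrix.Norms.L2Operator in
lemma trace_mul_nonneg_of_posSemidef {ι 𝕜 : Type*} [Fintype ι] [RCLike 𝕜] {A B : Matrix ι ι 𝕜}
    (hA : A.PosSemidef) (hB : B.PosSemidef) : 0 ≤ (A * B).trace := by
  classical
  obtain ⟨C, rfl⟩ := CStarAlgebra.nonneg_iff_eq_star_mul_self.mp hA.nonneg
  rw [mul_assoc, Matrix.trace_mul_comm]
  exact (hB.mul_mul_conjTranspose_same C).trace_nonneg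

lemma monotoneOn_of_derivWithin_nonneg {D : Set ℝ} (hD : Convex ℝ D) {f : ℝ → ℝ}
    (hf : DifferentiableOn ℝ f D) (hf' : ∀ x ∈ interior D, 0 ≤ derivWithin f D x) :
    MonotoneOn f D :=
  monotoneOn_of_deriv_nonneg hD hf.continuousOn (hf.mono interior_subset) fun x hx => by
    rw [← derivWithin_of_mem_nhds (mem_interior_iff_mem_nhds.1 hx)]
    exact hf' x hx

section LocalMax

lemma deriv_deriv_nonpos_of_isLocalMax {f : ℝ → ℝ} {a : ℝ} (hf : ContinuousAt f a)
    (hmax : IsLocalMax f a) : deriv (deriv f) a ≤ 0 := by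
  by_contra! hpos
  have hmin : IsLocalMin f a := isLocalMin_of_deriv_deriv_pos hpos hmax.deriv_eq_zero hf
  have hconst : f =ᶠ[𝓝 a] fun _ => f a := hmax.and hmin |>.mono fun _ h => le_antisymm h.1 h.2
  have hzero : deriv (deriv f) a = 0 := by simp [hconst.deriv.deriv_eq]
  exact hpos.ne' hzero

variable {E : Type*} [NormedAddCommGroup E] [NormedSpace ℝ E]

lemma deriv_deriv_comp_add_smul {w : E → ℝ} {x : E} (hw : ContDiffAt ℝ 2 w x) (v : E) :
    deriv (deriv fun t : ℝ => w (x + t • v)) 0 = iteratedFDeriv ℝ 2 w x ![v, v] := by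
  have hline (t : ℝ) : HasDerivAt (fun t : ℝ => x + t • v) v t := by
    simpa using ((hasDerivAt_id t).smul_const v).const_add x
  have htend : Tendsto (fun t : ℝ => x + t • v) (𝓝 0) (𝓝 x) := by
    simpa using (hline 0).continuousAt.tendsto
  have hderiv : (deriv fun t : ℝ => w (x + t • v)) =ᶠ[𝓝 0] fun t => fderiv ℝ w (x + t • v) v := by
    filter_upwards [htend.eventually (hw.eventually (by simp))] with t ht
    exact ((ht.differentiableAt (by simp)).hasFDerivAt.comp_hasDerivAt t (hline t)).deriv
  have hfderiv : DifferentiableAt ℝ (fderiv ℝ w) x :=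
    (hw.fderiv_right (m := 1) le_rfl).differentiableAt one_ne_zero
  have hfderiv_apply : HasFDerivAt (fun y => fderiv ℝ w y v)
      ((fderiv ℝ (fderiv ℝ w) x).flip v) (x + (0 : ℝ) • v) := by
    simpa using hfderiv.hasFDerivAt.clm_apply (hasFDerivAt_const v x)
  rw [hderiv.deriv_eq, iteratedFDeriv_two_apply]
  exact (hfderiv_apply.comp_hasDerivAt 0 (hline 0)).deriv

lemma iteratedFDeriv_two_nonpos_of_isLocalMax {w : E → ℝ} {x : E} (hw : ContDiffAt ℝ 2 w x)
    (hmax : IsLocalMax w x) (v : E) : iteratedFDeriv ℝ 2 w x ![v, v] ≤ 0 := by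
  have htend : Tendsto (fun t : ℝ => x + t • v) (𝓝 0) (𝓝 x) :=
    (by fun_prop : Continuous fun t : ℝ => x + t • v).tendsto' 0 x (by simp)
  rw [← deriv_deriv_comp_add_smul hw]
  refine deriv_deriv_nonpos_of_isLocalMax ?_ ?_
  · simpa [ContinuousAt, Function.comp_def] using hw.continuousAt.tendsto.comp htend
  · simpa [IsLocalMax, IsMaxFilter] using htend.eventually hmax

lemma gradient_eq_smul_of_isLocalMax_sub_smul {F : Type*} [NormedAddCommGroup F]
    [InnerProductSpace ℝ F] [CompleteSpace F] {u γ : F → ℝ} {c : ℝ} {x : F}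
    (hu : DifferentiableAt ℝ u x) (hγ : DifferentiableAt ℝ γ x)
    (hmax : IsLocalMax (u - c • γ) x) : gradient u x = c • gradient γ x := by
  have hfderiv : fderiv ℝ u x = c • fderiv ℝ γ x := by
    rw [← sub_eq_zero, ← fderiv_const_smul hγ, ← fderiv_sub hu (hγ.const_smul c)]
    exact hmax.fderiv_eq_zero
  simp only [gradient, hfderiv, map_smul]

end LocalMax

section Hessian

variable {n : ℕ} {u γ : EuclideanSpace ℝ (Fin n) → ℝ} {x : EuclideanSpace ℝ (Fin n)}

lemma hessMat_isHermitian (hu : ContDiffAt ℝ 2 u x) : (hessMat u x).IsHermitian := by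
  ext i j
  simpa [hessMat, iteratedFDeriv_two_apply] using (hu.isSymmSndFDerivAt (by simp)) _ _

lemma dotProduct_hessMat_mulVec (u : EuclideanSpace ℝ (Fin n) → ℝ)
    (x v : EuclideanSpace ℝ (Fin n)) :
    v ⬝ᵥ hessMat u x *ᵥ v = iteratedFDeriv ℝ 2 u x ![v, v] := by
  have hv : v = ∑ i, v i • EuclideanSpace.single i (1 : ℝ) := by
    simpa using ((EuclideanSpace.basisFun (Fin n) ℝ).sum_repr v).symm
  conv_rhs => rw [iteratedFDeriv_two_apply, hv]
  simp only [dotProduct, Matrix.mulVec, hessMat, iteratedFDeriv_two_apply, Finset.mul_sum,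
    Matrix.cons_val_zero, Matrix.cons_val_one, map_sum, map_smul, smul_eq_mul, _root_.sum_apply,
    _root_.smul_apply]
  rw [Finset.sum_comm]
  exact Finset.sum_congr rfl fun i _ => Finset.sum_congr rfl fun j _ => by ring

lemma neg_hessMat_posSemidef_of_isLocalMax (hu : ContDiffAt ℝ 2 u x) (hmax : IsLocalMax u x) :
    (-hessMat u x).PosSemidef := by
  refine .of_dotProduct_mulVec_nonneg (hessMat_isHermitian hu).neg fun v => ?_
  have := iteratedFDeriv_two_nonpos_of_isLocalMax hu hmax (WithLp.toLp 2 v)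
  simpa [Matrix.neg_mulVec, ← dotProduct_hessMat_mulVec] using this

lemma hessMat_sub_smul (hu : ContDiffAt ℝ 2 u x) (hγ : ContDiffAt ℝ 2 γ x) (c : ℝ) :
    hessMat (u - c • γ) x = hessMat u x - c • hessMat γ x := by
  ext i j
  simp [hessMat, iteratedFDeriv_sub_apply (i := 2) (g := c • γ) hu (hγ.const_smul c),
    iteratedFDeriv_const_smul_apply (i := 2) hγ]

variable {P : EuclideanSpace ℝ (Fin n) → Matrix (Fin n) (Fin n) ℝ}

lemma Lop_nonpos_of_isLocalMax (hP : (P x).PosSemidef) (hu : ContDiffAt ℝ 2 u x)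
    (hmax : IsLocalMax u x) : Lop P u x ≤ 0 := by
  have htrace := trace_mul_nonneg_of_posSemidef hP (neg_hessMat_posSemidef_of_isLocalMax hu hmax)
  simpa [Lop] using htrace

lemma Lop_sub_smul (hu : ContDiffAt ℝ 2 u x) (hγ : ContDiffAt ℝ 2 γ x) (c : ℝ) :
    Lop P (u - c • γ) x = Lop P u x - c * Lop P γ x := by
  simp [Lop, hessMat_sub_smul hu hγ, Matrix.mul_sub, Matrix.trace_sub]

lemma Lop_le_of_isLocalMax_sub_smul (hP : (P x).PosSemidef) (hu : ContDiffAt ℝ 2 u x)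
    (hγ : ContDiffAt ℝ 2 γ x) {c : ℝ} (hmax : IsLocalMax (u - c • γ) x) :
    Lop P u x ≤ c * Lop P γ x := by
  rw [← sub_nonpos, ← Lop_sub_smul hu hγ]
  exact Lop_nonpos_of_isLocalMax hP (hu.sub (hγ.const_smul c)) hmax

end Hessian

section Primitive

lemma integral_le_mul_sub_of_antitone {k : ℝ → ℝ} (hk : Antitone k) (a b : ℝ) :
    ∫ t in a..b, k t ≤ k a * (b - a) := by
  rcases le_total a b with hab | hba
  · calc ∫ t in a..b, k t ≤ ∫ _ in a..b, k a :=
          intervalIntegral.integral_mono_on hab hk.intervalIntegrable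
            intervalIntegrable_const fun t ht => hk ht.1
      _ = k a * (b - a) := by simp [mul_comm]
  · have hle : ∫ _ in b..a, k a ≤ ∫ t in b..a, k t :=
      intervalIntegral.integral_mono_on hba intervalIntegrable_const
        hk.intervalIntegrable fun t ht => hk ht.2
    rw [intervalIntegral.integral_const, smul_eq_mul] at hle
    rw [intervalIntegral.integral_symm]
    linarith

lemma tendsto_intervalIntegral_atTop_of_not_integrableOn {k : ℝ → ℝ} {a : ℝ}
    (hk : ∀ b c, IntervalIntegrable k volume b c) (hk0 : ∀ t, 0 ≤ k t)
    (hint : ¬ IntegrableOn k (Ioi a)) : Tendsto (fun t => ∫ s in a..t, k s) atTop atTop := by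
  have hmono : Monotone fun t => ∫ s in a..t, k s := fun b c hbc => by
    have hnonneg : 0 ≤ ∫ s in b..c, k s := intervalIntegral.integral_nonneg hbc fun t _ => hk0 t
    rwa [← intervalIntegral.integral_interval_sub_left (hk a c) (hk a b), sub_nonneg] at hnonneg
  refine (tendsto_atTop_of_monotone hmono).resolve_right fun ⟨l, hl⟩ => hint ?_
  refine integrableOn_Ioi_of_intervalIntegral_norm_tendsto l a
    (fun t => (hk a t).1) tendsto_id (hl.congr fun t => ?_)
  simp only [Real.norm_of_nonneg (hk0 _)]

end Primitive

lemma eventually_mul_const_lt_nhdsGT_zero (M : ℝ) {δ : ℝ} (hδ : 0 < δ) :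
    ∀ᶠ ε in 𝓝[>] (0 : ℝ), ε * M < δ := by
  have hlim : Tendsto (fun ε : ℝ => ε * M) (𝓝 0) (𝓝 0) := by
    simpa using (continuous_mul_const M).tendsto 0
  exact (hlim.mono_left nhdsWithin_le_nhds).eventually_lt_const hδ

lemma eventually_exists_isMax_sub_mul {X : Type*} [TopologicalSpace X] {u ψ : X → ℝ}
    (hu : Continuous u) (hub : BddAbove (range u)) (hψ : Continuous ψ)
    (hψtop : Tendsto ψ (cocompact X) atTop) {c : ℝ} {y : X} (hy : c < u y) :
    ∀ᶠ ε in 𝓝[>] (0 : ℝ), ∃ x, c < u x ∧ ∀ z, u z - ε * ψ z ≤ u x - ε * ψ x := by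
  have : Nonempty X := ⟨y⟩
  obtain ⟨b, hb⟩ := hub
  obtain ⟨p, hp⟩ := hψ.exists_forall_le hψtop
  filter_upwards [eventually_mul_const_lt_nhdsGT_zero (ψ y - ψ p) (sub_pos.2 hy),
    self_mem_nhdsWithin] with ε hε hε0
  have hbot : Tendsto (fun x => u x - ε * ψ x) (cocompact X) atBot :=
    tendsto_atBot_mono (fun x => sub_le_sub_right (hb ⟨x, rfl⟩) _) <|
      tendsto_atBot_add_const_left _ b <| tendsto_neg_atTop_atBot.comp <|
        hψtop.const_mul_atTop hε0
  have hcont : Continuous fun x => u x - ε * ψ x := hu.sub (continuous_const.mul hψ)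
  obtain ⟨x, hx⟩ := hcont.exists_forall_ge hbot
  have hp_le_x : ε * ψ p ≤ ε * ψ x := mul_le_mul_of_nonneg_left (hp x) (le_of_lt hε0)
  exact ⟨x, by linarith [hx y], hx⟩

lemma eventually_exists_isMax_sub_mul_notMem {X : Type*} [TopologicalSpace X] [Nonempty X]
    {u ψ : X → ℝ} (hu : Continuous u) (hub : BddAbove (range u))
    (hu_not_attained : ¬ ∃ x, ∀ y, u y ≤ u x) (hψ : Continuous ψ)
    (hψtop : Tendsto ψ (cocompact X) atTop) {K : Set X} (hK : IsCompact K) {δ : ℝ} (hδ : 0 < δ) :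
    ∀ᶠ ε in 𝓝[>] (0 : ℝ),
      ∃ x ∉ K, sSup (range u) - δ < u x ∧ ∀ z, u z - ε * ψ z ≤ u x - ε * ψ x := by
  have hlt (x) : u x < sSup (range u) := by
    push Not at hu_not_attained
    obtain ⟨y, hy⟩ := hu_not_attained x
    exact hy.trans_le (le_csSup hub ⟨y, rfl⟩)
  obtain ⟨c, hc, hcK⟩ : ∃ c < sSup (range u), ∀ x ∈ K, u x ≤ c :=
    hK.exists_forall_le' (α := ℝᵒᵈ) hu.continuousOn fun x _ => hlt x
  obtain ⟨_, ⟨y, rfl⟩, hy⟩ :=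
    exists_lt_of_lt_csSup (range_nonempty u) (max_lt hc (sub_lt_self (sSup (range u)) hδ))
  filter_upwards [eventually_exists_isMax_sub_mul hu hub hψ hψtop hy] with ε ⟨x, hcx, hmax⟩
  obtain ⟨hcx, hδx⟩ := max_lt_iff.1 hcx
  exact ⟨x, fun hxK => hcx.not_ge (hcK x hxK), hδx, hmax⟩

section OmoriYau

variable {n : ℕ} {P : EuclideanSpace ℝ (Fin n) → Matrix (Fin n) (Fin n) ℝ}

/-- The Omori–Yau maximum principle for the operator `L = tr(P ∘ Hess)` on `ℝⁿ`. -/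
def OmoriYauPrinciple (P : EuclideanSpace ℝ (Fin n) → Matrix (Fin n) (Fin n) ℝ) : Prop :=
  ∀ u : EuclideanSpace ℝ (Fin n) → ℝ, ContDiff ℝ 2 u → BddAbove (range u) →
    ∃ xs : ℕ → EuclideanSpace ℝ (Fin n), ∀ j : ℕ, 1 ≤ j →
      sSup (range u) - 1 / (j : ℝ) < u (xs j) ∧
      ‖gradient u (xs j)‖ < 1 / (j : ℝ) ∧
      Lop P u (xs j) < 1 / (j : ℝ)

lemma omoriYauPrinciple_of_forall_pos
    (h : ∀ u : EuclideanSpace ℝ (Fin n) → ℝ, ContDiff ℝ 2 u → BddAbove (range u) →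
      ∀ δ > 0, ∃ x, sSup (range u) - δ < u x ∧ ‖gradient u x‖ < δ ∧ Lop P u x < δ) :
    OmoriYauPrinciple P := by
  intro u hu hub
  choose! x hx using h u hu hub
  exact ⟨fun j => x (1 / j), fun j hj => hx _ (one_div_pos.2 (by exact_mod_cast hj))⟩

lemma almost_max_of_forall_le {u : EuclideanSpace ℝ (Fin n) → ℝ}
    {x : EuclideanSpace ℝ (Fin n)} (hP : (P x).PosSemidef) (hu : ContDiffAt ℝ 2 u x)
    (hx : ∀ y, u y ≤ u x) {δ : ℝ} (hδ : 0 < δ) :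
    sSup (range u) - δ < u x ∧ ‖gradient u x‖ < δ ∧ Lop P u x < δ := by
  have hmax : IsLocalMax u x := Eventually.of_forall hx
  have hsup : sSup (range u) ≤ u x := csSup_le (range_nonempty u) (forall_mem_range.2 hx)
  have hgrad : gradient u x = 0 := by simp [gradient, hmax.fderiv_eq_zero]
  refine ⟨by linarith, by simpa [hgrad] using hδ, ?_⟩
  exact (Lop_nonpos_of_isLocalMax hP hu hmax).trans_lt hδ

lemma isLocalMax_sub_smul_of_antitone {X : Type*} [TopologicalSpace X] {k : ℝ → ℝ}
    (hk : Antitone k) {u γ : X → ℝ} {ε : ℝ} (hε : 0 ≤ ε) {x : X}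
    (hx : ∀ z, u z - ε * ∫ t in 0..γ z, k t ≤ u x - ε * ∫ t in 0..γ x, k t) :
    IsLocalMax (u - (ε * k (γ x)) • γ) x := by
  refine Eventually.of_forall fun z => ?_
  have hconcave : (∫ t in 0..γ z, k t) - ∫ t in 0..γ x, k t ≤ k (γ x) * (γ z - γ x) := by
    rw [intervalIntegral.integral_interval_sub_left hk.intervalIntegrable hk.intervalIntegrable]
    exact integral_le_mul_sub_of_antitone hk _ _
  have hscaled := mul_le_mul_of_nonneg_left hconcave hε
  simp only [Pi.sub_apply, Pi.smul_apply, smul_eq_mul]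
  linarith [hx z]

theorem omoriYauPrinciple_of_antitone_weight (hP : ∀ x, (P x).PosSemidef) {k : ℝ → ℝ}
    (hk : Antitone k) (hk0 : ∀ t, 0 ≤ k t) (hint : ¬ IntegrableOn k (Ioi 0))
    {γ : EuclideanSpace ℝ (Fin n) → ℝ} (hγ : ContDiff ℝ 2 γ)
    (hγtop : Tendsto γ (cocompact (EuclideanSpace ℝ (Fin n))) atTop) {M₁ M₂ : ℝ}
    (hgrad : ∀ᶠ x in cocompact (EuclideanSpace ℝ (Fin n)), k (γ x) * ‖gradient γ x‖ ≤ M₁)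
    (hL : ∀ᶠ x in cocompact (EuclideanSpace ℝ (Fin n)), k (γ x) * Lop P γ x ≤ M₂) :
    OmoriYauPrinciple P := by
  refine omoriYauPrinciple_of_forall_pos fun u hu hub δ hδ => ?_
  by_cases hatt : ∃ x, ∀ y, u y ≤ u x
  · obtain ⟨x, hx⟩ := hatt
    exact ⟨x, almost_max_of_forall_le (hP x) hu.contDiffAt hx hδ⟩
  have hint_k (a b : ℝ) : IntervalIntegrable k volume a b := hk.intervalIntegrable
  obtain ⟨K, hK, hKbound⟩ := mem_cocompact.1 (hgrad.and hL)
  have hperturbed := eventually_exists_isMax_sub_mul_notMem hu.continuous hub hatt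
    ((intervalIntegral.continuous_primitive hint_k 0).comp hγ.continuous)
    ((tendsto_intervalIntegral_atTop_of_not_integrableOn hint_k hk0 hint).comp hγtop) hK hδ
  obtain ⟨ε, ⟨x, hxK, hδx, hmax⟩, hεM₁, hεM₂, hε⟩ := (hperturbed.and <|
    (eventually_mul_const_lt_nhdsGT_zero M₁ hδ).and <|
    (eventually_mul_const_lt_nhdsGT_zero M₂ hδ).and self_mem_nhdsWithin).exists
  have hloc : IsLocalMax (u - (ε * k (γ x)) • γ) x :=
    isLocalMax_sub_smul_of_antitone hk hε.le hmax
  obtain ⟨hgradx, hLx⟩ := hKbound hxK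
  refine ⟨x, hδx, ?_, ?_⟩
  · calc ‖gradient u x‖ = ε * (k (γ x) * ‖gradient γ x‖) := by
          rw [gradient_eq_smul_of_isLocalMax_sub_smul
            (hu.differentiable two_ne_zero x) (hγ.differentiable two_ne_zero x) hloc, norm_smul,
            Real.norm_of_nonneg (mul_nonneg hε.le (hk0 _)), mul_assoc]
      _ ≤ ε * M₁ := mul_le_mul_of_nonneg_left hgradx hε.le
      _ < δ := hεM₁
  · calc Lop P u x ≤ ε * k (γ x) * Lop P γ x :=
          Lop_le_of_isLocalMax_sub_smul (hP x) hu.contDiffAt hγ.contDiffAt hloc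
      _ = ε * (k (γ x) * Lop P γ x) := mul_assoc _ _ _
      _ ≤ ε * M₂ := mul_le_mul_of_nonneg_left hLx hε.le
      _ < δ := hεM₂

end OmoriYau

section Weight

/-- The function `1 / √G` on `[0, ∞)`, whose primitive is the `φ` of the paper. It is extended to
negative arguments by its value at `0`, so that it is antitone on `ℝ` when `G` is monotone on
`[0, ∞)`. -/
noncomputable def invSqrtWeight (G : ℝ → ℝ) (t : ℝ) : ℝ := (√(G (max t 0)))⁻¹

lemma invSqrtWeight_of_nonneg (G : ℝ → ℝ) {t : ℝ} (ht : 0 ≤ t) :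
    invSqrtWeight G t = (√(G t))⁻¹ := by
  rw [invSqrtWeight, max_eq_left ht]

lemma invSqrtWeight_nonneg (G : ℝ → ℝ) (t : ℝ) : 0 ≤ invSqrtWeight G t :=
  inv_nonneg.2 (Real.sqrt_nonneg _)

variable {G : ℝ → ℝ}

lemma antitone_invSqrtWeight (hG : MonotoneOn G (Ici 0)) (hG0 : 0 < G 0) :
    Antitone (invSqrtWeight G) := fun s t hst => by
  have hpos : 0 < G (max s 0) :=
    hG0.trans_le (hG self_mem_Ici (le_max_right s 0) (le_max_right s 0))
  exact inv_anti₀ (Real.sqrt_pos.2 hpos) <| Real.sqrt_le_sqrt <|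
    hG (le_max_right s 0) (le_max_right t 0) (max_le_max_right 0 hst)

lemma integrableOn_invSqrtWeight_iff (hG : ∀ t, 0 ≤ t → 0 ≤ G t) :
    IntegrableOn (invSqrtWeight G) (Ioi 0) ↔
      IntegrableOn (fun t => G t ^ (-(1 / 2) : ℝ)) (Ici 0) := by
  rw [integrableOn_Ici_iff_integrableOn_Ioi]
  refine integrableOn_congr_fun (fun t ht => ?_) measurableSet_Ioi
  have ht0 : 0 ≤ t := le_of_lt ht
  rw [invSqrtWeight_of_nonneg G ht0, Real.sqrt_eq_rpow, ← Real.rpow_neg (hG t ht0)]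

lemma eventually_invSqrtWeight_mul_sqrt_mul_sqrt_le (hG : ∀ t, 0 ≤ t → 0 < G t) {C : ℝ}
    (hC : ∀ᶠ t in atTop, t * G (t ^ ((1 : ℝ) / 2)) / G t ≤ C) :
    ∀ᶠ t in atTop, invSqrtWeight G t * (√t * √(G √t)) ≤ √C := by
  filter_upwards [hC, eventually_ge_atTop 0] with t ht ht0
  rw [← Real.sqrt_eq_rpow] at ht
  calc invSqrtWeight G t * (√t * √(G √t)) = √(t * G √t / G t) := by
        rw [invSqrtWeight_of_nonneg G ht0, Real.sqrt_div' _ (hG t ht0).le, Real.sqrt_mul ht0,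
          div_eq_inv_mul]
    _ ≤ √C := Real.sqrt_le_sqrt ht

lemma eventually_invSqrtWeight_mul_sqrt_le (hG : MonotoneOn G (Ici 0)) (hG0 : 0 < G 0) {M : ℝ}
    (hM : ∀ᶠ t in atTop, invSqrtWeight G t * (√t * √(G √t)) ≤ M) :
    ∀ᶠ t in atTop, invSqrtWeight G t * √t ≤ M / √(G 0) := by
  filter_upwards [hM] with t ht
  have hsqrt : √(G 0) ≤ √(G √t) :=
    Real.sqrt_le_sqrt (hG self_mem_Ici (Real.sqrt_nonneg t) (Real.sqrt_nonneg t))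
  rw [le_div_iff₀ (Real.sqrt_pos.2 hG0), mul_assoc]
  exact le_trans (by gcongr; exact invSqrtWeight_nonneg G t) ht

end Weight

theorem omori_yau_for_L_euclidean_general {n : ℕ}
    {P : EuclideanSpace ℝ (Fin n) → Matrix (Fin n) (Fin n) ℝ} (hPsd : ∀ x, (P x).PosSemidef)
    {G : ℝ → ℝ} (hGmono : MonotoneOn G (Ici 0)) (hG0 : 0 < G 0)
    (hGint : ¬ IntegrableOn (fun t : ℝ => (G t) ^ (-(1 / 2) : ℝ)) (Ici 0))
    (hGlim : ∃ C : ℝ, ∀ᶠ t in atTop, t * G (t ^ ((1 : ℝ) / 2)) / G t ≤ C)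
    {γ : EuclideanSpace ℝ (Fin n) → ℝ} (hγC2 : ContDiff ℝ 2 γ)
    (hγ1 : Tendsto γ (cocompact (EuclideanSpace ℝ (Fin n))) atTop)
    (hγ2 : ∃ A > (0 : ℝ), ∃ K₁ : Set (EuclideanSpace ℝ (Fin n)), IsCompact K₁ ∧
      ∀ x ∉ K₁, ‖gradient γ x‖ ≤ A * (γ x) ^ ((1 : ℝ) / 2))
    (hγ3 : ∃ B > (0 : ℝ), ∃ K₂ : Set (EuclideanSpace ℝ (Fin n)), IsCompact K₂ ∧
      ∀ x ∉ K₂, Lop P γ x ≤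
        B * (γ x) ^ ((1 : ℝ) / 2) * (G ((γ x) ^ ((1 : ℝ) / 2))) ^ ((1 : ℝ) / 2)) :
    OmoriYauPrinciple P := by
  simp only [← Real.sqrt_eq_rpow] at hγ2 hγ3
  obtain ⟨C, hC⟩ := hGlim
  obtain ⟨A, hA, K₁, hK₁, hgrad⟩ := hγ2
  obtain ⟨B, hB, K₂, hK₂, hL⟩ := hγ3
  have hGpos (t : ℝ) (ht : 0 ≤ t) : 0 < G t := hG0.trans_le (hGmono self_mem_Ici ht ht)
  have hweight := eventually_invSqrtWeight_mul_sqrt_mul_sqrt_le hGpos hC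
  have hweight' := eventually_invSqrtWeight_mul_sqrt_le hGmono hG0 hweight
  have hk0 := invSqrtWeight_nonneg G
  refine omoriYauPrinciple_of_antitone_weight hPsd (antitone_invSqrtWeight hGmono hG0) hk0
    (mt (integrableOn_invSqrtWeight_iff fun t ht => (hGpos t ht).le).1 hGint) hγC2 hγ1
    (M₁ := A * (√C / √(G 0))) (M₂ := B * √C) ?_ ?_
  · filter_upwards [hγ1.eventually hweight', hK₁.compl_mem_cocompact] with x hx hxK
    calc invSqrtWeight G (γ x) * ‖gradient γ x‖ ≤ invSqrtWeight G (γ x) * (A * √(γ x)) :=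
          mul_le_mul_of_nonneg_left (hgrad x hxK) (hk0 _)
      _ = A * (invSqrtWeight G (γ x) * √(γ x)) := by ring
      _ ≤ A * (√C / √(G 0)) := mul_le_mul_of_nonneg_left hx hA.le
  · filter_upwards [hγ1.eventually hweight, hK₂.compl_mem_cocompact] with x hx hxK
    calc invSqrtWeight G (γ x) * Lop P γ x
        ≤ invSqrtWeight G (γ x) * (B * √(γ x) * √(G √(γ x))) :=
          mul_le_mul_of_nonneg_left (hL x hxK) (hk0 _)
      _ = B * (invSqrtWeight G (γ x) * (√(γ x) * √(G √(γ x)))) := by ring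
      _ ≤ B * √C := mul_le_mul_of_nonneg_left hx hB.le

/-- Euclidean case of Theorem 3.2.1: under the stated conditions on `P`, `G` and the
exhaustion function `γ`, the Omori–Yau maximum principle holds for `L = tr(P ∘ Hess)`
on `ℝⁿ`. -/
theorem omori_yau_for_L_euclidean (n : ℕ) (hn : 1 ≤ n)
    (P : EuclideanSpace ℝ (Fin n) → Matrix (Fin n) (Fin n) ℝ)
    (hPcont : Continuous P) (hPsd : ∀ x, (P x).PosSemidef)
    (hPtr : ∃ C : ℝ, ∀ x, (P x).trace ≤ C)
    (G : ℝ → ℝ) (hGsmooth : ContDiffOn ℝ (⊤ : ℕ∞) G (Set.Ici 0))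
    (hG0 : 0 < G 0)
    (hG' : ∀ t ≥ (0 : ℝ), 0 ≤ derivWithin G (Set.Ici 0) t)
    (hGint : ¬ IntegrableOn (fun t : ℝ => (G t) ^ (-(1 / 2) : ℝ)) (Set.Ici 0))
    (hGlim : ∃ C : ℝ, ∀ᶠ t in atTop, t * G (t ^ ((1 : ℝ) / 2)) / G t ≤ C)
    (γ : EuclideanSpace ℝ (Fin n) → ℝ) (hγC2 : ContDiff ℝ 2 γ)
    (hγnonneg : ∀ x, 0 ≤ γ x)
    (hγ1 : Tendsto γ (cocompact (EuclideanSpace ℝ (Fin n))) atTop)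
    (hγ2 : ∃ A > (0 : ℝ), ∃ K₁ : Set (EuclideanSpace ℝ (Fin n)), IsCompact K₁ ∧
      ∀ x ∉ K₁, ‖gradient γ x‖ ≤ A * (γ x) ^ ((1 : ℝ) / 2))
    (hγ3 : ∃ B > (0 : ℝ), ∃ K₂ : Set (EuclideanSpace ℝ (Fin n)), IsCompact K₂ ∧
      ∀ x ∉ K₂, Lop P γ x ≤ B * (γ x) ^ ((1 : ℝ) / 2) * (G ((γ x) ^ ((1 : ℝ) / 2))) ^ ((1 : ℝ) / 2)) :
    ∀ u : EuclideanSpace ℝ (Fin n) → ℝ, ContDiff ℝ 2 u → BddAbove (Set.range u) →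
      ∃ xs : ℕ → EuclideanSpace ℝ (Fin n), ∀ j : ℕ, 1 ≤ j →
        sSup (Set.range u) - 1 / (j : ℝ) < u (xs j) ∧
        ‖gradient u (xs j)‖ < 1 / (j : ℝ) ∧
        Lop P u (xs j) < 1 / (j : ℝ) := by
  exact omori_yau_for_L_euclidean_general hPsd
    (monotoneOn_of_derivWithin_nonneg (convex_Ici 0) (hGsmooth.differentiableOn (by simp))
      fun t ht => hG' t (interior_subset ht)) hG0 hGint hGlim hγC2 hγ1 hγ2 hγ3
end
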